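/- Contractivity of the FedSplit operator: Let f_j : R^d -> R be l_j-strongly convex and L_j-smooth for j = 1,...,m; set l* = min_j l_j, L* = max_j L_j, kappa = L*/l*, and s = 1/sqrt(l* L*). Define F(z) = sum_j f_j(z_j) on (R^d)^m, the blockwise reflected resolvent R_{sF}(z) = (2*prox_{s f_1}(z_1) - z_1, ..., 2*prox_{s f_m}(z_m) - z_m), and R_{I_E}(z) = 2*P_E(z) - z where P_E is the orthogonal projection onto the consensus subspace E = { z in (R^d)^m : z_1 = ... = z_m }. Then the composed operator T = R_{sF} o R_{I_E} satisfies ||T(z) - T(z')|| <= (1 - 2/(sqrt(kappa)+1)) * ||z - z'|| for all z, z' in (R^d)^m; in particular T is a contraction and has a unique fixed point. -/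

import Mathlib

open Filter Finset RealInnerProductSpace

section FedSplitHelpers

variable {E : Type*} [NormedAddCommGroup E] [InnerProductSpace ℝ E] [CompleteSpace E]

/-- Descent lemma. -/
theorem fs_descent (f : E → ℝ) (hf : Differentiable ℝ f) (M : ℝ)
    (hM : ∀ x y, ‖gradient f x - gradient f y‖ ≤ M * ‖x - y‖) (x y : E) :
    f y ≤ f x + ⟪gradient f x, y - x⟫ + M / 2 * ‖y - x‖ ^ 2 := by
  set v := y - x with hv
  let ψ : ℝ → ℝ := fun t => f x + t * ⟪gradient f x, v⟫ + M / 2 * t ^ 2 * ‖v‖ ^ 2 - f (x + t • v)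
  have hd : ∀ t, HasDerivAt ψ (⟪gradient f x, v⟫ + M * t * ‖v‖ ^ 2
      - ⟪gradient f (x + t • v), v⟫) t := by
    intro t
    have h1 : HasDerivAt (fun t : ℝ => x + t • v) v t := by
      simpa using ((hasDerivAt_id t).smul_const v).const_add x
    have h2 : HasDerivAt (fun t : ℝ => f (x + t • v)) (⟪gradient f (x + t • v), v⟫) t := by
      have := (hf (x + t • v)).hasGradientAt.hasFDerivAt.comp_hasDerivAt t h1
      rw [InnerProductSpace.toDual_apply_apply] at this
      exact this
    have h3 : HasDerivAt (fun t : ℝ => f x + t * ⟪gradient f x, v⟫ + M / 2 * t ^ 2 * ‖v‖ ^ 2)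
        (⟪gradient f x, v⟫ + M * t * ‖v‖ ^ 2) t := by
      have a := ((hasDerivAt_id t).mul_const (⟪gradient f x, v⟫)).const_add (f x)
      have b := (((hasDerivAt_pow 2 t).const_mul (M / 2)).mul_const (‖v‖ ^ 2))
      refine (a.add b).congr_deriv ?_
      push_cast; ring
    exact h3.sub h2
  have hmono : MonotoneOn ψ (Set.Icc 0 1) := by
    apply monotoneOn_of_deriv_nonneg (convex_Icc 0 1)
    · exact fun t _ => (hd t).continuousAt.continuousWithinAt
    · exact fun t _ => (hd t).differentiableAt.differentiableWithinAt
    · intro t ht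
      rw [interior_Icc] at ht
      rw [(hd t).deriv]
      have h1 : ⟪gradient f (x + t • v) - gradient f x, v⟫ ≤ M * ‖t • v‖ * ‖v‖ := by
        refine (real_inner_le_norm _ _).trans ?_
        have := hM (x + t • v) x
        rw [add_sub_cancel_left] at this
        gcongr
      rw [norm_smul, Real.norm_of_nonneg ht.1.le, inner_sub_left] at h1
      nlinarith
  have := hmono (Set.left_mem_Icc.2 zero_le_one) (Set.right_mem_Icc.2 zero_le_one) zero_le_one
  simp only [ψ] at this
  simp only [zero_smul, one_smul, add_zero, hv, add_sub_cancel] at this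
  simp only [hv]
  linarith

theorem fs_half (f : E → ℝ) (hf : Differentiable ℝ f) (μ M : ℝ)
    (hμ : ∀ x y, f y ≥ f x + ⟪gradient f x, y - x⟫ + μ / 2 * ‖y - x‖ ^ 2)
    (hM : ∀ x y, ‖gradient f x - gradient f y‖ ≤ M * ‖x - y‖) (x y : E) (t : ℝ) :
    (t - (M - μ) / 2 * t ^ 2) * ‖gradient f y - gradient f x - μ • (y - x)‖ ^ 2
      ≤ f y - f x - ⟪gradient f x, y - x⟫ - μ / 2 * ‖y - x‖ ^ 2 := by
  set D := gradient f y - gradient f x - μ • (y - x) with hD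
  set u := y - x with hu
  have h1 := fs_descent f hf M hM y (y - t • D)
  have h2 := hμ x (y - t • D)
  have e1 : y - t • D - y = -(t • D) := by abel
  have e2 : y - t • D - x = u - t • D := by rw [hu]; abel
  rw [e1] at h1
  rw [e2] at h2
  have e3 : ‖D‖ ^ 2 = ⟪gradient f y, D⟫ - ⟪gradient f x, D⟫ - μ * ⟪u, D⟫ := by
    rw [← real_inner_self_eq_norm_sq]
    nth_rewrite 1 [hD]
    simp only [inner_sub_left, real_inner_smul_left]
  rw [norm_sub_sq_real, norm_smul, real_inner_smul_right, inner_sub_right,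
    real_inner_smul_right, mul_pow, Real.norm_eq_abs, sq_abs] at h2
  rw [norm_neg, norm_smul, inner_neg_right, real_inner_smul_right, mul_pow, Real.norm_eq_abs,
    sq_abs] at h1
  have e4 : t * ‖D‖ ^ 2 = t * (⟪gradient f y, D⟫ - ⟪gradient f x, D⟫ - μ * ⟪u, D⟫) := by rw [← e3]
  nlinarith

/-- strong monotonicity -/
theorem fs_mono (f : E → ℝ) (μ : ℝ)
    (hμ : ∀ x y, f y ≥ f x + ⟪gradient f x, y - x⟫ + μ / 2 * ‖y - x‖ ^ 2) (x y : E) :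
    μ * ‖x - y‖ ^ 2 ≤ ⟪gradient f x - gradient f y, x - y⟫ := by
  have h1 := hμ x y
  have h2 := hμ y x
  have e : y - x = -(x - y) := by abel
  rw [e, inner_neg_right, norm_neg] at h1
  rw [inner_sub_left]
  linarith

theorem fs_interp (f : E → ℝ) (hf : Differentiable ℝ f) (μ M : ℝ) (h0 : 0 < μ) (hle : μ ≤ M)
    (hμ : ∀ x y, f y ≥ f x + ⟪gradient f x, y - x⟫ + μ / 2 * ‖y - x‖ ^ 2)
    (hM : ∀ x y, ‖gradient f x - gradient f y‖ ≤ M * ‖x - y‖) (x y : E) :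
    μ * M * ‖x - y‖ ^ 2 + ‖gradient f x - gradient f y‖ ^ 2
      ≤ (μ + M) * ⟪gradient f x - gradient f y, x - y⟫ := by
  have hm := fs_mono f μ hμ x y
  rcases hle.eq_or_lt with h | h
  · subst h
    have h3 : ‖gradient f x - gradient f y‖ ^ 2 ≤ (μ * ‖x - y‖) ^ 2 := by
      have := hM x y
      gcongr
    nlinarith
  · have h1 := fs_half f hf μ M hμ hM x y (1 / (M - μ))
    have h2 := fs_half f hf μ M hμ hM y x (1 / (M - μ))
    have hp : 0 < M - μ := sub_pos.2 h
    have ec : (1 / (M - μ) - (M - μ) / 2 * (1 / (M - μ)) ^ 2) = 1 / (2 * (M - μ)) := by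
      field_simp; ring
    rw [ec] at h1 h2
    have e1 : gradient f y - gradient f x - μ • (y - x)
        = -((gradient f x - gradient f y) - μ • (x - y)) := by
      module
    have e : y - x = -(x - y) := by abel
    rw [e1, norm_neg, e, inner_neg_right, norm_neg] at h1
    set a := x - y
    rw [norm_sub_sq_real, norm_smul, real_inner_smul_right, mul_pow, Real.norm_eq_abs,
      sq_abs] at h1 h2
    have h3 := add_le_add h1 h2
    rw [← two_mul, ← mul_assoc] at h3
    have ec2 : 2 * (1 / (2 * (M - μ))) = 1 / (M - μ) := by field_simp
    rw [ec2, one_div, inv_mul_le_iff₀ hp] at h3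
    rw [inner_sub_left] at *
    nlinarith

theorem fs_opt (f : E → ℝ) (hf : Differentiable ℝ f) (s : ℝ) (hs : 0 < s) (w p : E)
    (hp : ∀ u, f p + (2 * s)⁻¹ * ‖w - p‖ ^ 2 ≤ f u + (2 * s)⁻¹ * ‖w - u‖ ^ 2) :
    w = p + s • gradient f p := by
  have hmin : IsLocalMin (fun u => f u + (2 * s)⁻¹ * ‖w - u‖ ^ 2) p :=
    Filter.Eventually.of_forall hp
  have h1 := (hf p).hasGradientAt.hasFDerivAt
  have h2 : HasFDerivAt (fun u : E => w - u) (-ContinuousLinearMap.id ℝ E) p :=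
    (hasFDerivAt_id p).const_sub w
  have h3 := (h2.norm_sq).const_mul ((2 * s)⁻¹)
  have h4 := hmin.hasFDerivAt_eq_zero (h1.add h3)
  have h5 : ∀ v, ⟪gradient f p - s⁻¹ • (w - p), v⟫ = 0 := by
    intro v
    have := DFunLike.congr_fun h4 v
    simp only [ContinuousLinearMap.add_apply, InnerProductSpace.toDual_apply_apply] at this
    simp at this
    have hg : ⟪gradient f p, v⟫ = fderiv ℝ f p v := by simp
    rw [inner_sub_left, real_inner_smul_left, inner_sub_left]
    rw [← this, hg]
    field_simp
    ring
  have h6 : gradient f p - s⁻¹ • (w - p) = 0 := inner_self_eq_zero.1 (h5 _)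
  rw [sub_eq_zero.1 h6, smul_inv_smul₀ hs.ne']
  abel

theorem fs_resolvent (f : E → ℝ) (hf : Differentiable ℝ f) (μ M : ℝ) (h0 : 0 < μ) (hle : μ ≤ M)
    (hμ : ∀ x y, f y ≥ f x + ⟪gradient f x, y - x⟫ + μ / 2 * ‖y - x‖ ^ 2)
    (hM : ∀ x y, ‖gradient f x - gradient f y‖ ≤ M * ‖x - y‖)
    (s : ℝ) (hs : s = 1 / Real.sqrt (μ * M)) (prox : E → E)
    (hp : ∀ w u, f (prox w) + (2 * s)⁻¹ * ‖w - prox w‖ ^ 2 ≤ f u + (2 * s)⁻¹ * ‖w - u‖ ^ 2)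
    (w w' : E) :
    ‖((2 : ℝ) • prox w - w) - ((2 : ℝ) • prox w' - w')‖ ^ 2
      ≤ (1 - 2 / (Real.sqrt (M / μ) + 1)) ^ 2 * ‖w - w'‖ ^ 2 := by
  have hMp : 0 < M := h0.trans_le hle
  have hsp : 0 < s := by rw [hs]; positivity
  have hw := fs_opt f hf s hsp w (prox w) (hp w)
  have hw' := fs_opt f hf s hsp w' (prox w') (hp w')
  have hi := fs_interp f hf μ M h0 hle hμ hM (prox w) (prox w')
  set p := prox w
  set q := prox w'
  set a := p - q with ha
  set G := gradient f p - gradient f q with hG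
  have e1 : ((2 : ℝ) • p - w) - ((2 : ℝ) • q - w') = a - s • G := by
    rw [hw, hw', ha, hG]; module
  have e2 : w - w' = a + s • G := by
    rw [hw, hw', ha, hG]; module
  rw [e1, e2, norm_sub_sq_real, norm_add_sq_real, norm_smul, real_inner_smul_right, mul_pow,
    Real.norm_eq_abs, sq_abs, real_inner_comm]
  set k := Real.sqrt (M / μ) with hk
  have hkp : 0 < k := by positivity
  have hk2 : k ^ 2 = M / μ := Real.sq_sqrt (by positivity)
  have hMk : M = μ * k ^ 2 := by rw [hk2]; field_simp
  have hsk : s = 1 / (μ * k) := by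
    rw [hs, hMk, show μ * (μ * k ^ 2) = (μ * k) ^ 2 by ring, Real.sqrt_sq (by positivity)]
  have ec : 1 - 2 / (k + 1) = (k - 1) / (k + 1) := by field_simp; ring
  rw [ec, div_pow, div_mul_eq_mul_div, le_div_iff₀ (by positivity)]
  set A := ‖a‖ ^ 2
  set I := ⟪G, a⟫
  set B := ‖G‖ ^ 2
  rw [hMk] at hi
  -- goal equivalent to k (A + s²B) ≤ (k²+1) s I
  have key : k * (A + s ^ 2 * B) ≤ (k ^ 2 + 1) * (s * I) := by
    have : k * (A + s ^ 2 * B) = (1 / (μ ^ 2 * k)) * (μ * (μ * k ^ 2) * A + B) := by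
      rw [hsk]; field_simp
    rw [this]
    have h2 : (k ^ 2 + 1) * (s * I) = (1 / (μ ^ 2 * k)) * ((μ + μ * k ^ 2) * I) := by
      rw [hsk]; field_simp; ring
    rw [h2]
    gcongr
  nlinarith

theorem fs_reflect {E : Type*} [NormedAddCommGroup E] [InnerProductSpace ℝ E] {m : ℕ} (hm : 0 < m) (z : Fin m → E) :
    ∑ j, ‖(2 : ℝ) • ((m : ℝ)⁻¹ • ∑ k, z k) - z j‖ ^ 2 = ∑ j, ‖z j‖ ^ 2 := by
  have hm' : (m : ℝ) ≠ 0 := by positivity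
  set S := ∑ k, z k with hS
  simp only [norm_sub_sq_real, Finset.sum_add_distrib, Finset.sum_sub_distrib]
  rw [← Finset.mul_sum, ← inner_sum, ← hS]
  simp only [norm_smul, real_inner_smul_left, real_inner_self_eq_norm_sq, Finset.sum_const,
    Finset.card_univ, Fintype.card_fin, nsmul_eq_mul, mul_pow, Real.norm_eq_abs, sq_abs]
  field_simp
  ring

end FedSplitHelpers

/-- Contractivity of the FedSplit operator `T = R_{sF} ∘ R_{I_E}` (key step in the proof of
Theorem 3 of Pathak–Wainwright): with `l* = min_j l_j`, `L* = max_j L_j`, `κ = L*/l*` and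
stepsize `s = 1/√(l* L*)`, the operator `T` is Lipschitz with constant `1 - 2/(√κ+1) < 1`
on `(ℝ^d)^m`, hence a contraction with a unique fixed point.  Here
`T(z)_j = 2 prox_{s f_j}((R_E z)_j) - (R_E z)_j` with `(R_E z)_j = 2 z̄ - z_j`. -/
theorem fedsplit_operator_contraction
    {d m : ℕ} (hm : 0 < m)
    (f : Fin m → EuclideanSpace ℝ (Fin d) → ℝ)
    (hdiff : ∀ j, Differentiable ℝ (f j))
    (l L : Fin m → ℝ) (hl : ∀ j, 0 < l j)
    (hstrong : ∀ j x y, f j y ≥ f j x + ⟪gradient (f j) x, y - x⟫ + l j / 2 * ‖y - x‖ ^ 2)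
    (hsmooth : ∀ j x y, ‖gradient (f j) x - gradient (f j) y‖ ≤ L j * ‖x - y‖)
    (lstar Lstar : ℝ)
    (hlstar : IsLeast (Set.range l) lstar)
    (hLstar : IsGreatest (Set.range L) Lstar)
    (kappa : ℝ) (hkappa : kappa = Lstar / lstar)
    (s : ℝ) (hs : s = 1 / Real.sqrt (lstar * Lstar))
    (prox : Fin m → EuclideanSpace ℝ (Fin d) → EuclideanSpace ℝ (Fin d))
    (hprox : ∀ j w u, f j (prox j w) + (2 * s)⁻¹ * ‖w - prox j w‖ ^ 2
        ≤ f j u + (2 * s)⁻¹ * ‖w - u‖ ^ 2)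
    (T : PiLp 2 (fun _ : Fin m => EuclideanSpace ℝ (Fin d))
       → PiLp 2 (fun _ : Fin m => EuclideanSpace ℝ (Fin d)))
    (hT : ∀ z j, T z j =
      (2 : ℝ) • prox j ((2 : ℝ) • ((m : ℝ)⁻¹ • ∑ k, z k) - z j)
        - ((2 : ℝ) • ((m : ℝ)⁻¹ • ∑ k, z k) - z j)) :
    (∀ z z', ‖T z - T z'‖ ≤ (1 - 2 / (Real.sqrt kappa + 1)) * ‖z - z'‖) ∧
    (1 - 2 / (Real.sqrt kappa + 1) < 1) ∧
    (∃! w, T w = w) := by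
  have hlt : 1 - 2 / (Real.sqrt kappa + 1) < 1 := by
    have : 0 < 2 / (Real.sqrt kappa + 1) := by positivity
    linarith
  rcases Nat.eq_zero_or_pos d with hd | hd
  · subst hd
    have hsub : ∀ a b : PiLp 2 (fun _ : Fin m => EuclideanSpace ℝ (Fin 0)), a = b := by
      intro a b
      ext j i
      exact i.elim0
    refine ⟨fun z z' => ?_, hlt, 0, hsub _ _, fun _ _ => hsub _ _⟩
    rw [hsub (T z) (T z'), hsub z z']
    simp
  obtain ⟨⟨j0, hj0⟩, hlmin⟩ := hlstar
  have hLmax := hLstar.2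
  have hlp : 0 < lstar := hj0 ▸ hl j0
  have hμ : ∀ j x y, f j y ≥ f j x + ⟪gradient (f j) x, y - x⟫ + lstar / 2 * ‖y - x‖ ^ 2 := by
    intro j x y
    have h1 := hstrong j x y
    have h2 : lstar ≤ l j := hlmin ⟨j, rfl⟩
    have h3 : lstar / 2 * ‖y - x‖ ^ 2 ≤ l j / 2 * ‖y - x‖ ^ 2 := by gcongr
    linarith
  have hM : ∀ j x y, ‖gradient (f j) x - gradient (f j) y‖ ≤ Lstar * ‖x - y‖ := by
    intro j x y
    have h2 : L j ≤ Lstar := hLmax ⟨j, rfl⟩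
    exact (hsmooth j x y).trans (by gcongr)
  have hle : lstar ≤ Lstar := by
    let e : EuclideanSpace ℝ (Fin d) := EuclideanSpace.single ⟨0, hd⟩ 1
    have he : ‖e - 0‖ = 1 := by simp [e]
    have h1 := fs_mono (f j0) lstar (hμ j0) e 0
    have h2 := real_inner_le_norm (gradient (f j0) e - gradient (f j0) 0) (e - 0)
    have h3 := hM j0 e 0
    rw [he] at h1 h2 h3
    linarith
  have hLp : 0 < Lstar := hlp.trans_le hle
  have hc0 : 0 ≤ 1 - 2 / (Real.sqrt kappa + 1) := by
    have : 1 ≤ Real.sqrt kappa := by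
      rw [Real.one_le_sqrt, hkappa, one_le_div hlp]; exact hle
    rw [sub_nonneg, div_le_one (by positivity)]
    linarith
  have hLip : ∀ z z', ‖T z - T z'‖ ≤ (1 - 2 / (Real.sqrt kappa + 1)) * ‖z - z'‖ := by
    intro z z'
    refine (sq_le_sq₀ (norm_nonneg _) (mul_nonneg hc0 (norm_nonneg _))).1 ?_
    rw [mul_pow, PiLp.norm_sq_eq_of_L2, PiLp.norm_sq_eq_of_L2]
    have hr := fs_reflect hm (fun j => (z - z') j)
    rw [← hr, Finset.mul_sum]
    apply Finset.sum_le_sum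
    intro j _
    have h1 := fs_resolvent (f j) (hdiff j) lstar Lstar hlp hle (hμ j) (hM j) s hs (prox j)
      (hprox j) ((2 : ℝ) • ((m : ℝ)⁻¹ • ∑ k, z k) - z j)
      ((2 : ℝ) • ((m : ℝ)⁻¹ • ∑ k, z' k) - z' j)
    rw [← hT, ← hT, ← hkappa] at h1
    have e : (2 : ℝ) • ((m : ℝ)⁻¹ • ∑ k, (z - z') k) - (z - z') j
        = ((2 : ℝ) • ((m : ℝ)⁻¹ • ∑ k, z k) - z j)
          - ((2 : ℝ) • ((m : ℝ)⁻¹ • ∑ k, z' k) - z' j) := by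
      simp only [PiLp.sub_apply, Finset.sum_sub_distrib]
      module
    rw [e]
    exact h1
  refine ⟨hLip, hlt, ?_⟩
  have hcw : ContractingWith (Real.toNNReal (1 - 2 / (Real.sqrt kappa + 1))) T := by
    refine ⟨?_, LipschitzWith.of_dist_le_mul fun z z' => ?_⟩
    · rw [Real.toNNReal_lt_one]; exact hlt
    · rw [dist_eq_norm, dist_eq_norm, Real.coe_toNNReal _ hc0]; exact hLip z z'
  exact ⟨hcw.fixedPoint, hcw.fixedPoint_isFixedPt, fun y hy => hcw.fixedPoint_unique hy⟩
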